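/- arXiv:2504.04117 — 2 statements merged into one kernel-verified Lean document; each statement's English description precedes it below -/
import Mathlib

section
/- Let X and Y be normed vector spaces and T : X → Y a nonzero bounded linear operator of finite rank l. Then the infimum, over all bases (w₁,...,w_l) of T(X) with dual basis (w₁*,...,w_l*) in T(X)*, of max_{1 ≤ j ≤ l} ‖Σ_{i=1}^{j} (wᵢ* ∘ T)(·) wᵢ‖ (operator norm in L(X,Y)) is attained: it is a minimum. -/
open Finset

lemma aux_bound {E : Type*} [NormedAddCommGroup E] {l : ℕ} (a : Fin l → E) (C : ℝ)
    (h : ∀ j : Fin l, ‖∑ i ∈ Finset.Iic j, a i‖ ≤ C) (i : Fin l) : ‖a i‖ ≤ 2 * C := by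
  have hC : 0 ≤ C := (norm_nonneg _).trans (h i)
  by_cases hi : i.val = 0
  · have : Finset.Iic i = {i} := by
      ext k; simp only [Finset.mem_Iic, Finset.mem_singleton, Fin.le_def, Fin.ext_iff]; omega
    have h1 := h i
    rw [this, Finset.sum_singleton] at h1
    linarith
  · have hlt : i.val - 1 < l := by omega
    have : Finset.Iic i = insert i (Finset.Iic (⟨i.val - 1, hlt⟩ : Fin l)) := by
      ext k; simp only [Finset.mem_Iic, Finset.mem_insert, Fin.le_def, Fin.ext_iff]; omega
    have h1 := h i
    have h2 := h ⟨i.val - 1, hlt⟩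
    rw [this, Finset.sum_insert (by simp only [Finset.mem_Iic, Fin.le_def]; omega)] at h1
    calc ‖a i‖ = ‖(a i + ∑ i ∈ Finset.Iic (⟨i.val - 1, hlt⟩ : Fin l), a i)
          - ∑ i ∈ Finset.Iic (⟨i.val - 1, hlt⟩ : Fin l), a i‖ := by rw [add_sub_cancel_right]
      _ ≤ _ := norm_sub_le _ _
      _ ≤ 2 * C := by linarith

/-- Existence of a minimiser, for a surjection onto a finite dimensional subspace. -/
lemma aux_min {X Y : Type*} [NormedAddCommGroup X] [NormedSpace ℝ X]
    [NormedAddCommGroup Y] [NormedSpace ℝ Y] (V : Submodule ℝ Y) [FiniteDimensional ℝ V]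
    (T : X →L[ℝ] V) (R : V →L[ℝ] X) (hR : ∀ v, T (R v) = v) {l : ℕ} [Nonempty (Fin l)]
    (hrank : Module.finrank ℝ V = l) :
    ∃ p : (Fin l → V) × (Fin l → (V →L[ℝ] ℝ)),
      ((∀ i, ‖p.1 i‖ = 1) ∧ ∀ i j, p.2 i (p.1 j) = if i = j then 1 else 0) ∧
      ∀ q : (Fin l → V) × (Fin l → (V →L[ℝ] ℝ)),
        ((∀ i, ‖q.1 i‖ = 1) ∧ ∀ i j, q.2 i (q.1 j) = if i = j then 1 else 0) →
        (⨆ j : Fin l, ‖∑ i ∈ Finset.Iic j, ((p.2 i).comp T).smulRight (p.1 i : Y)‖) ≤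
        (⨆ j : Fin l, ‖∑ i ∈ Finset.Iic j, ((q.2 i).comp T).smulRight (q.1 i : Y)‖) := by
  set A : Set ((Fin l → V) × (Fin l → (V →L[ℝ] ℝ))) :=
    {p | (∀ i, ‖p.1 i‖ = 1) ∧ ∀ i j, p.2 i (p.1 j) = if i = j then 1 else 0} with hA
  set g : ((Fin l → V) × (Fin l → (V →L[ℝ] ℝ))) → ℝ := fun p =>
    ⨆ j : Fin l, ‖∑ i ∈ Finset.Iic j, ((p.2 i).comp T).smulRight (p.1 i : Y)‖ with hg
  have hgc : Continuous g := by
    simp only [hg, ← Finset.sup'_univ_eq_ciSup]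
    refine Continuous.finset_sup'_apply _ fun j _ => ?_
    refine Continuous.norm (continuous_finsetSum _ fun i _ => ?_)
    have e : (fun p : (Fin l → V) × (Fin l → (V →L[ℝ] ℝ)) =>
        ((p.2 i).comp T).smulRight (p.1 i : Y)) =
        fun p => ContinuousLinearMap.smulRightL ℝ X Y ((p.2 i).comp T) (p.1 i : Y) := by
      ext p x; simp
    rw [e]
    fun_prop
  have hAc : IsClosed A := by
    have : A = (⋂ i, {p | ‖p.1 i‖ = 1}) ∩
        ⋂ i, ⋂ j, {p | p.2 i (p.1 j) = if i = j then 1 else 0} := by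
      ext p; simp [hA]
    rw [this]
    refine (isClosed_iInter fun i => isClosed_eq (by fun_prop) continuous_const).inter
      (isClosed_iInter fun i => isClosed_iInter fun j => isClosed_eq ?_ continuous_const)
    fun_prop
  have hne : A.Nonempty := by
    let b := Module.finBasisOfFinrankEq ℝ V hrank
    have hb : ∀ i, ‖b i‖ ≠ 0 := fun i => norm_ne_zero_iff.2 (b.ne_zero i)
    refine ⟨(fun i => ‖b i‖⁻¹ • b i, fun i => ‖b i‖ • LinearMap.toContinuousLinearMap (b.coord i)),
      fun i => ?_, fun i j => ?_⟩
    · change ‖‖b i‖⁻¹ • b i‖ = 1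
      rw [norm_smul, norm_inv, norm_norm, inv_mul_cancel₀ (hb i)]
    · by_cases h : i = j
      · subst h; simpa using inv_mul_cancel₀ (hb i)
      · simp [h]
  obtain ⟨a, ha⟩ := hne
  have : ProperSpace V := FiniteDimensional.proper_real V
  have : ProperSpace (V →L[ℝ] ℝ) := FiniteDimensional.proper_real (V →L[ℝ] ℝ)
  have hc1 : IsCompact (Metric.closedBall (0 : V) 1) := isCompact_closedBall (α := V) 0 1
  have hc2 : IsCompact (Metric.closedBall (0 : V →L[ℝ] ℝ) (2 * g a * ‖R‖)) :=
    isCompact_closedBall (α := V →L[ℝ] ℝ) 0 _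
  have hK : IsCompact (A ∩ {p | g p ≤ g a}) := by
    refine IsCompact.of_isClosed_subset
      ((isCompact_univ_pi (fun _ : Fin l => hc1)).prod (isCompact_univ_pi (fun _ : Fin l => hc2)))
      (hAc.inter (isClosed_le hgc continuous_const)) ?_
    rintro p ⟨hp, hpg⟩
    have hle : ∀ j : Fin l,
        ‖∑ i ∈ Finset.Iic j, ((p.2 i).comp T).smulRight (p.1 i : Y)‖ ≤ g a := fun j =>
      (le_ciSup (f := fun j : Fin l =>
        ‖∑ i ∈ Finset.Iic j, ((p.2 i).comp T).smulRight (p.1 i : Y)‖)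
        (Set.finite_range _).bddAbove j).trans hpg
    refine ⟨fun i _ => ?_, fun i _ => ?_⟩
    · rw [Metric.mem_closedBall, dist_zero_right]
      exact (hp.1 i).le
    · have h1 := aux_bound _ _ hle i
      rw [ContinuousLinearMap.norm_smulRight_apply, Submodule.norm_coe, hp.1 i, mul_one] at h1
      have h2 : p.2 i = ((p.2 i).comp T).comp R := by ext v; simp [hR]
      have h3 : ‖p.2 i‖ ≤ 2 * g a * ‖R‖ := by
        rw [h2]
        exact (ContinuousLinearMap.opNorm_comp_le _ _).trans
          (mul_le_mul_of_nonneg_right h1 (norm_nonneg _))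
      exact (mem_closedBall_zero_iff (E := V →L[ℝ] ℝ)).2 h3
  obtain ⟨p, hp, hmin⟩ := hK.exists_isMinOn ⟨a, ha, le_refl (g a)⟩ hgc.continuousOn
  refine ⟨p, hp.1, fun q hq => ?_⟩
  change g p ≤ g q
  rcases le_total (g q) (g a) with h | h
  · exact hmin ⟨hq, h⟩
  · exact hp.2.trans h


/-- The infimum defining the constant `𝔠(T)` in Definition of cylindrical constant is
attained: among all bases of `T(X)` (with their dual functionals), some basis minimises
the maximal norm of partial sums `∑_{i ≤ j} (wᵢ* ∘ T)(·) wᵢ`. -/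
theorem stmt15 {X Y : Type*} [NormedAddCommGroup X] [NormedSpace ℝ X]
    [NormedAddCommGroup Y] [NormedSpace ℝ Y]
    (T : X →L[ℝ] Y) (hT : T ≠ 0) (l : ℕ) (hl : 0 < l)
    (hrank : Module.finrank ℝ (LinearMap.range (T : X →ₗ[ℝ] Y)) = l) :
    ∃ (w : Fin l → Y) (φ : Fin l → (X →L[ℝ] ℝ)),
      (LinearIndependent ℝ w ∧ (∀ i, w i ∈ LinearMap.range (T : X →ₗ[ℝ] Y)) ∧
        ∀ x : X, T x = ∑ i, φ i x • w i) ∧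
      ∀ (w' : Fin l → Y) (φ' : Fin l → (X →L[ℝ] ℝ)),
        (LinearIndependent ℝ w' ∧ (∀ i, w' i ∈ LinearMap.range (T : X →ₗ[ℝ] Y)) ∧
          ∀ x : X, T x = ∑ i, φ' i x • w' i) →
        (⨆ j : Fin l, ‖∑ i ∈ Finset.Iic j, (φ i).smulRight (w i)‖)
          ≤ ⨆ j : Fin l, ‖∑ i ∈ Finset.Iic j, (φ' i).smulRight (w' i)‖ := by
  classical
  have : Nonempty (Fin l) := ⟨⟨0, hl⟩⟩
  set V := LinearMap.range (T : X →ₗ[ℝ] Y) with hV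
  have : FiniteDimensional ℝ V := Module.finite_of_finrank_pos (by omega)
  let T' : X →L[ℝ] V := T.codRestrict V fun x => ⟨x, rfl⟩
  have hT' : ∀ x, (T' x : Y) = T x := fun x => rfl
  have hsurj : LinearMap.range (T' : X →ₗ[ℝ] V) = ⊤ := by
    rw [LinearMap.range_eq_top]
    rintro ⟨y, x, rfl⟩
    exact ⟨x, rfl⟩
  obtain ⟨R₀, hR₀⟩ := LinearMap.exists_rightInverse_of_surjective _ hsurj
  let R : V →L[ℝ] X := LinearMap.toContinuousLinearMap R₀
  have hR : ∀ v, T' (R v) = v := fun v => LinearMap.congr_fun hR₀ v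
  obtain ⟨p, ⟨hp1, hp2⟩, hmin⟩ := aux_min V T' R hR hrank
  have hli : LinearIndependent ℝ p.1 := by
    rw [Fintype.linearIndependent_iff]
    intro c hc i
    have := congrArg (p.2 i) hc
    simpa [hp2] using this
  refine ⟨fun i => (p.1 i : Y), fun i => (p.2 i).comp T', ⟨?_, fun i => (p.1 i).2, ?_⟩, ?_⟩
  · exact hli.map' V.subtype V.ker_subtype
  · intro x
    let b := basisOfLinearIndependentOfCardEqFinrank hli (by simp [hrank])
    have hb : ∀ i, b i = p.1 i := fun i => by simp [b]
    have key : ∀ v : V, v = ∑ i, p.2 i v • p.1 i := by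
      intro v
      have h1 : ∀ i, p.2 i v = b.repr v i := by
        intro i
        conv_lhs => rw [← b.sum_repr v]
        simp [hb, hp2]
      simp only [h1, ← hb]
      exact (b.sum_repr v).symm
    have := congrArg (Subtype.val) (key (T' x))
    simpa [hT'] using this
  · rintro w' φ' ⟨hw, hmem, hsum⟩
    have hw0 : ∀ i, ‖w' i‖ ≠ 0 := fun i => norm_ne_zero_iff.2 (hw.ne_zero i)
    have hinj : ∀ c d : Fin l → ℝ, ∑ i, c i • w' i = ∑ i, d i • w' i → ∀ i, c i = d i := by
      intro c d h i
      have h2 : ∑ i, (c i - d i) • w' i = 0 := by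
        simp only [sub_smul, Finset.sum_sub_distrib, h, sub_self]
      exact sub_eq_zero.1 (Fintype.linearIndependent_iff.1 hw _ h2 i)
    have hRT : ∀ (v : V), T (R v) = v := fun v => by rw [← hT', hR]
    have hφ1 : ∀ i x, φ' i (R (T' x)) = φ' i x := by
      intro i x
      refine hinj (fun i => φ' i (R (T' x))) (fun i => φ' i x) ?_ i
      rw [← hsum, ← hsum, hRT, hT']
    have hφ2 : ∀ i j, φ' i (R ⟨w' j, hmem j⟩) = if i = j then 1 else 0 := by
      intro i j
      refine hinj (fun i => φ' i (R ⟨w' j, hmem j⟩)) (fun i => if i = j then 1 else 0) ?_ i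
      rw [← hsum, hRT]
      simp
    have hq := hmin (fun i => ‖w' i‖⁻¹ • ⟨w' i, hmem i⟩, fun i => ‖w' i‖ • (φ' i).comp R) ⟨?_, ?_⟩
    · refine hq.trans (le_of_eq ?_)
      congr 1
      ext j
      congr 1
      refine Finset.sum_congr rfl fun i _ => ?_
      ext x
      simp [hφ1, smul_smul]
      congr 1
      field_simp [hw0 i]
    · intro i
      simp [norm_smul, hw0 i]
    · intro i j
      change ‖w' i‖ * φ' i (R (‖w' j‖⁻¹ • ⟨w' j, hmem j⟩)) = _
      rw [map_smul, map_smul, hφ2, smul_eq_mul]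
      by_cases h : i = j
      · subst h; simp [mul_inv_cancel₀ (hw0 i)]
      · simp [h]
end

section
/- Let X be a normed space, G ⊆ X, P ∈ X* a nonzero norm-attaining functional with P(v_P) = ‖P‖ for some unit vector v_P, and α ∈ (0,1). Suppose ξ(G,P,α) := sup{ H¹(G ∩ γ(ℝ)) : γ : ℝ → X Lipschitz, P(γ'(t)) ≥ α‖γ'(t)‖·‖P‖ whenever γ'(t) exists } is finite. Then there exists a function g : X → ℝ such that (i) 0 ≤ g(x) ≤ ‖P‖·ξ(G,P,α) for all x; (ii) |g(x+y) − g(x)| ≤ (α‖P‖/(1−α))·‖y‖ for all x ∈ X and y ∈ ker P; (iii) for every x,w ∈ X there is λ ∈ [0,1] with |g(x+w) − g(x) − λP(w)| ≤ (2α‖P‖/(1−α))·‖w‖, and λ = 1 whenever the segment [x, x + (P(w)/‖P‖)v_P] is contained in G; and (iv) g is (1 + 2α/(1−α))‖P‖-Lipschitz. -/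
open MeasureTheory Set

/-- Curves parametrized by the value of `P`, with Lipschitz constant `1 / (α ‖P‖)`. -/
def Adm18 {X : Type*} [NormedAddCommGroup X] [NormedSpace ℝ X]
    (P : X →L[ℝ] ℝ) (α : ℝ) (γ : ℝ → X) : Prop :=
  (∀ t, P (γ t) = t) ∧ ∀ s t, s ≤ t → α * ‖P‖ * ‖γ t - γ s‖ ≤ t - s

/-- Competitors in the definition of `g x`. -/
def T18 {X : Type*} [NormedAddCommGroup X] [NormedSpace ℝ X]
    (G : Set X) (P : X →L[ℝ] ℝ) (v : X) (α : ℝ) (x : X) : Set ℝ :=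
  {m | ∃ s : ℝ, 0 ≤ s ∧ ∃ γ : ℝ → X, Adm18 P α γ ∧ γ (P (x + s • v)) = x + s • v ∧
    m = (volume ({t | γ t ∈ G} ∩ Iic (P (x + s • v)))).toReal - s * ‖P‖}

lemma adm_lip18 {X : Type*} [NormedAddCommGroup X] [NormedSpace ℝ X]
    (P : X →L[ℝ] ℝ) (hp : 0 < ‖P‖) (α : ℝ) (hα : 0 < α) (γ : ℝ → X) (h : Adm18 P α γ) :
    LipschitzWith (Real.toNNReal (1 / (α * ‖P‖))) γ := by
  have hc : 0 < α * ‖P‖ := by positivity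
  have key : ∀ s t, s ≤ t → ‖γ t - γ s‖ ≤ 1 / (α * ‖P‖) * (t - s) := by
    intro s t hst
    have := h.2 s t hst
    rw [one_div, inv_mul_eq_div, le_div_iff₀ hc]
    linarith
  apply LipschitzWith.of_dist_le_mul
  intro a b
  rw [Real.coe_toNNReal _ (by positivity), dist_eq_norm, Real.dist_eq]
  rcases le_total a b with hab | hab
  · rw [norm_sub_rev, abs_sub_comm, abs_of_nonneg (sub_nonneg.2 hab)]
    exact key a b hab
  · rw [abs_of_nonneg (sub_nonneg.2 hab)]
    exact key b a hab

lemma adm_deriv18 {X : Type*} [NormedAddCommGroup X] [NormedSpace ℝ X]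
    (P : X →L[ℝ] ℝ) (hp : 0 < ‖P‖) (α : ℝ) (hα : 0 < α) (γ : ℝ → X) (h : Adm18 P α γ)
    (t : ℝ) (w : X) (hw : HasDerivAt γ w t) : α * ‖w‖ * ‖P‖ ≤ P w := by
  have hc : 0 < α * ‖P‖ := by positivity
  have h1 : ‖w‖ ≤ 1 / (α * ‖P‖) := by
    have := hw.hasFDerivAt.le_of_lipschitz (adm_lip18 P hp α hα γ h)
    rw [Real.coe_toNNReal _ (by positivity)] at this
    simpa using this
  have h2 : HasDerivAt (fun s => P (γ s)) (P w) t := P.hasFDerivAt.comp_hasDerivAt t hw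
  have h3 : (fun s => P (γ s)) = fun s => s := funext h.1
  rw [h3] at h2
  have h4 : P w = 1 := h2.unique (hasDerivAt_id t)
  rw [le_div_iff₀ hc] at h1
  rw [h4]
  linarith

lemma adm_glue18 {X : Type*} [NormedAddCommGroup X] [NormedSpace ℝ X]
    (P : X →L[ℝ] ℝ) (α : ℝ) (hα : 0 < α) (γ : ℝ → X) (h : Adm18 P α γ)
    (a : ℝ) (u : X) (hu : P u = 1) (hu' : α * ‖P‖ * ‖u‖ ≤ 1) :
    Adm18 P α (fun t => γ (min t a) + (max t a - a) • u) := by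
  constructor
  · intro t
    have := min_add_max t a
    simp only [map_add, map_smul, h.1, hu, smul_eq_mul]
    linarith
  · intro s t hst
    have h0 : (0:ℝ) ≤ α * ‖P‖ := by positivity
    have h1 := h.2 (min s a) (min t a) (min_le_min_right a hst)
    have h2 : max s a ≤ max t a := max_le_max_right a hst
    have e : (γ (min t a) + (max t a - a) • u) - (γ (min s a) + (max s a - a) • u)
      = (γ (min t a) - γ (min s a)) + (max t a - max s a) • u := by module
    have h3 : ‖(γ (min t a) - γ (min s a)) + (max t a - max s a) • u‖
      ≤ ‖γ (min t a) - γ (min s a)‖ + (max t a - max s a) * ‖u‖ := by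
      refine (norm_add_le _ _).trans ?_
      rw [norm_smul, Real.norm_eq_abs, abs_of_nonneg (sub_nonneg.2 h2)]
    have h4 := mul_le_mul_of_nonneg_left h3 h0
    have h5 := mul_le_mul_of_nonneg_left hu' (sub_nonneg.2 h2)
    have := min_add_max t a
    have := min_add_max s a
    simp only [e]
    nlinarith

lemma vol_le18 {X : Type*} [NormedAddCommGroup X] [NormedSpace ℝ X]
    [MeasurableSpace X] [BorelSpace X]
    (G : Set X) (P : X →L[ℝ] ℝ) (hp : 0 < ‖P‖)
    (α : ℝ) (hα : 0 < α) (ξ : ℝ)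
    (hξ : (⨆ γ : {γ : ℝ → X // (∃ K : NNReal, LipschitzWith K γ) ∧
            ∀ (t : ℝ) (w : X), HasDerivAt γ w t → α * ‖w‖ * ‖P‖ ≤ P w},
          μH[1] (G ∩ Set.range (γ : ℝ → X))) = ENNReal.ofReal ξ)
    (γ : ℝ → X) (h : Adm18 P α γ) :
    volume {t | γ t ∈ G} ≤ ENNReal.ofReal (‖P‖ * ξ) := by
  have h1 : μH[1] (G ∩ Set.range γ) ≤ ENNReal.ofReal ξ := by
    rw [← hξ]
    exact le_iSup (fun γ : {γ : ℝ → X // (∃ K : NNReal, LipschitzWith K γ) ∧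
            ∀ (t : ℝ) (w : X), HasDerivAt γ w t → α * ‖w‖ * ‖P‖ ≤ P w} =>
          μH[1] (G ∩ Set.range (γ : ℝ → X)))
      ⟨γ, ⟨_, adm_lip18 P hp α hα γ h⟩, adm_deriv18 P hp α hα γ h⟩
  have h2 : {t | γ t ∈ G} ⊆ P '' (G ∩ Set.range γ) := fun t ht => ⟨γ t, ⟨ht, t, rfl⟩, h.1 t⟩
  have h3 := P.lipschitz.hausdorffMeasure_image_le (d := 1) zero_le_one (G ∩ Set.range γ)
  rw [hausdorffMeasure_real] at h3
  refine (measure_mono h2).trans (h3.trans ?_)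
  rw [ENNReal.rpow_one, ENNReal.ofReal_mul hp.le, ofReal_norm_eq_enorm]
  exact mul_le_mul_right h1 _

/-- Extension of a curve by a segment, possibly collecting extra measure. -/
lemma ext18 {X : Type*} [NormedAddCommGroup X] [NormedSpace ℝ X]
    (G : Set X) (P : X →L[ℝ] ℝ) (hp : 0 < ‖P‖)
    (α : ℝ) (hα : 0 < α) (B : ℝ)
    (hB : ∀ γ : ℝ → X, Adm18 P α γ → volume {t | γ t ∈ G} ≤ ENNReal.ofReal B)
    (γ : ℝ → X) (h : Adm18 P α γ) (x z : X) (hx : γ (P x) = x)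
    (hxz : α * ‖P‖ * ‖z - x‖ ≤ P (z - x)) :
    ∃ η : ℝ → X, Adm18 P α η ∧ η (P z) = z ∧
      (volume ({t | γ t ∈ G} ∩ Iic (P x))).toReal ≤
        (volume ({t | η t ∈ G} ∩ Iic (P z))).toReal ∧
      (segment ℝ x z ⊆ G → (volume ({t | γ t ∈ G} ∩ Iic (P x))).toReal + P (z - x) ≤
        (volume ({t | η t ∈ G} ∩ Iic (P z))).toReal) := by
  have hc : 0 < α * ‖P‖ := by positivity
  have fin : ∀ γ : ℝ → X, Adm18 P α γ → ∀ S, volume ({t | γ t ∈ G} ∩ S) ≠ ⊤ := fun γ h S =>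
    ne_top_of_le_ne_top ENNReal.ofReal_ne_top ((measure_mono inter_subset_left).trans (hB γ h))
  by_cases hzx : z = x
  · subst hzx
    exact ⟨γ, h, hx, le_rfl, by simp⟩
  have hn : 0 < ‖z - x‖ := norm_pos_iff.2 (sub_ne_zero.2 hzx)
  have hd : 0 < P (z - x) := lt_of_lt_of_le (by positivity) hxz
  have hab : P x < P z := by rw [map_sub] at hd; linarith
  set u : X := (P (z - x))⁻¹ • (z - x) with hu
  have hA := adm_glue18 P α hα γ h (P x) u
    (by rw [hu, map_smul, smul_eq_mul, inv_mul_cancel₀ hd.ne'])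
    (by
      rw [hu, norm_smul, Real.norm_eq_abs, abs_of_pos (inv_pos.2 hd)]
      rw [show α * ‖P‖ * ((P (z - x))⁻¹ * ‖z - x‖) = (α * ‖P‖ * ‖z - x‖) / P (z - x) by
        field_simp]
      exact (div_le_one hd).2 hxz)
  have hsub : {t | γ t ∈ G} ∩ Iic (P x) ⊆
      {t | γ (min t (P x)) + (max t (P x) - P x) • u ∈ G} ∩ Iic (P z) := by
    rintro t ⟨ht, ht'⟩
    have ht' : t ≤ P x := ht'
    refine ⟨?_, ht'.trans hab.le⟩
    simpa [min_eq_left ht', max_eq_right ht'] using ht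
  refine ⟨_, hA, ?_, ENNReal.toReal_mono (fin _ hA _) (measure_mono hsub), ?_⟩
  · simp only [min_eq_right hab.le, max_eq_left hab.le, hx, hu]
    rw [← map_sub, smul_inv_smul₀ hd.ne']
    abel
  · intro hseg
    have hsub2 : Ioc (P x) (P z) ⊆
        {t | γ (min t (P x)) + (max t (P x) - P x) • u ∈ G} ∩ Iic (P z) := by
      rintro t ⟨h1, h2⟩
      refine ⟨?_, h2⟩
      simp only [mem_setOf_eq, min_eq_right h1.le, max_eq_left h1.le, hx, hu]
      apply hseg
      rw [segment_eq_image']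
      refine ⟨(t - P x) * (P (z - x))⁻¹, ⟨?_, ?_⟩, ?_⟩
      · exact mul_nonneg (by linarith) (inv_pos.2 hd).le
      · rw [← div_eq_mul_inv, div_le_one hd, map_sub]; linarith
      · simp only [mul_smul]
    have hdis : Disjoint ({t | γ t ∈ G} ∩ Iic (P x)) (Ioc (P x) (P z)) := by
      rw [Set.disjoint_left]
      rintro t ⟨_, h1⟩ ⟨h2, _⟩
      exact absurd h1 (not_le.2 h2)
    have hm := measure_mono (μ := volume) (union_subset hsub hsub2)
    rw [measure_union hdis measurableSet_Ioc] at hm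
    have := ENNReal.toReal_mono (fin _ hA _) hm
    rw [ENNReal.toReal_add (fin _ h _) (by simp), Real.volume_Ioc,
      ENNReal.toReal_ofReal (by linarith)] at this
    rw [map_sub]
    exact this


/-- Existence of the "one-direction steep" auxiliary function `g` associated to a set `G`,
a norm-attaining functional `P` and a steepness parameter `α ∈ (0,1)`, assuming the
supremum `ξ(G,P,α)` of `H¹`-measures of `G` along `α`-steep Lipschitz curves is finite. -/
theorem stmt18 {X : Type*} [NormedAddCommGroup X] [NormedSpace ℝ X]
    [MeasurableSpace X] [BorelSpace X]
    (G : Set X) (P : X →L[ℝ] ℝ) (hP : P ≠ 0)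
    (v : X) (hv : ‖v‖ = 1) (hPv : P v = ‖P‖)
    (α : ℝ) (hα : α ∈ Set.Ioo (0 : ℝ) 1)
    (ξ : ℝ) (hξ0 : 0 ≤ ξ)
    (hξ : (⨆ γ : {γ : ℝ → X // (∃ K : NNReal, LipschitzWith K γ) ∧
            ∀ (t : ℝ) (w : X), HasDerivAt γ w t → α * ‖w‖ * ‖P‖ ≤ P w},
          μH[1] (G ∩ Set.range (γ : ℝ → X))) = ENNReal.ofReal ξ) :
    ∃ g : X → ℝ,
      (∀ x : X, 0 ≤ g x ∧ g x ≤ ‖P‖ * ξ) ∧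
      (∀ x y : X, P y = 0 → |g (x + y) - g x| ≤ α * ‖P‖ / (1 - α) * ‖y‖) ∧
      (∀ x w : X, ∃ l ∈ Set.Icc (0 : ℝ) 1,
        |g (x + w) - (g x + l * P w)| ≤ 2 * α * ‖P‖ / (1 - α) * ‖w‖ ∧
        (segment ℝ x (x + (P w / ‖P‖) • v) ⊆ G → l = 1)) ∧
      LipschitzWith (Real.toNNReal ((1 + 2 * α / (1 - α)) * ‖P‖)) g := by

  obtain ⟨hα0, hα1⟩ := hα
  have hp : 0 < ‖P‖ := norm_pos_iff.2 hP
  have h1α : 0 < 1 - α := by linarith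
  have hBnn : 0 ≤ ‖P‖ * ξ := by positivity
  have hB := vol_le18 G P hp α hα0 ξ hξ
  have hTle : ∀ x, ∀ m ∈ T18 G P v α x, m ≤ ‖P‖ * ξ := by
    rintro x m ⟨s, hs, γ, hγ, -, rfl⟩
    have h1 : (volume ({t | γ t ∈ G} ∩ Iic (P (x + s • v)))).toReal ≤ ‖P‖ * ξ :=
      ENNReal.toReal_le_of_le_ofReal hBnn ((measure_mono inter_subset_left).trans (hB γ hγ))
    have : 0 ≤ s * ‖P‖ := by positivity
    linarith
  have hbdd : ∀ x, BddAbove (T18 G P v α x) := fun x => ⟨_, hTle x⟩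
  have hTnn : ∀ x, ∃ m ∈ T18 G P v α x, 0 ≤ m := by
    intro x
    refine ⟨_, ⟨0, le_rfl, fun t => x + ((t - P x) / ‖P‖) • v, ⟨?_, ?_⟩, ?_, rfl⟩, ?_⟩
    · intro t
      simp only [map_add, map_smul, hPv, smul_eq_mul]
      field_simp
      ring
    · intro s t hst
      have e : x + ((t - P x) / ‖P‖) • v - (x + ((s - P x) / ‖P‖) • v)
        = ((t - s) / ‖P‖) • v := by
        rw [show (t - s) / ‖P‖ = (t - P x) / ‖P‖ - (s - P x) / ‖P‖ by ring]
        module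
      rw [e, norm_smul, hv, Real.norm_eq_abs,
        abs_of_nonneg (div_nonneg (sub_nonneg.2 hst) hp.le)]
      rw [show α * ‖P‖ * ((t - s) / ‖P‖ * 1) = α * (t - s) by field_simp]
      nlinarith
    · simp
    · simp
  have hne : ∀ x, (T18 G P v α x).Nonempty := fun x => let ⟨m, hm, _⟩ := hTnn x; ⟨m, hm⟩
  -- the function
  obtain ⟨g, hg⟩ : ∃ g : X → ℝ, ∀ x, g x = sSup (T18 G P v α x) := ⟨_, fun _ => rfl⟩
  have hg0 : ∀ x, 0 ≤ g x := by
    intro x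
    obtain ⟨m, hm, hm0⟩ := hTnn x
    rw [hg]
    exact hm0.trans (le_csSup (hbdd x) hm)
  have hg1 : ∀ x, g x ≤ ‖P‖ * ξ := fun x => by
    rw [hg]; exact csSup_le (hne x) (hTle x)
  -- growth bound
  have hA : ∀ z s, 0 ≤ s → g (z + s • v) ≤ g z + s * ‖P‖ := by
    intro z s hs
    rw [hg, hg]
    refine csSup_le (hne _) ?_
    rintro m ⟨r, hr, γ, hγ, hγe, rfl⟩
    rw [← sub_le_iff_le_add]
    refine le_csSup (hbdd z) ⟨s + r, by positivity, γ, hγ, ?_, ?_⟩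
    · rw [add_smul, ← add_assoc]; exact hγe
    · rw [add_smul, ← add_assoc]; ring
  -- monotonicity
  have hM : ∀ x z, α * ‖P‖ * ‖z - x‖ ≤ P (z - x) → g x ≤ g z := by
    intro x z hxz
    rw [hg, hg]
    refine csSup_le (hne _) ?_
    rintro m ⟨r, hr, γ, hγ, hγe, rfl⟩
    obtain ⟨η, hη, hηe, hle, -⟩ := ext18 G P hp α hα0 _ hB γ hγ _ (z + r • v) hγe
      (by rw [add_sub_add_right_eq_sub]; exact hxz)
    refine le_trans (sub_le_sub_right hle _) (le_csSup (hbdd z) ⟨r, hr, η, hη, hηe, rfl⟩)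
  have hsteep : ∀ (x : X) (s : ℝ), 0 ≤ s →
      α * ‖P‖ * ‖(x + s • v) - x‖ ≤ P ((x + s • v) - x) := by
    intro x s hs
    rw [add_sub_cancel_left, norm_smul, hv, map_smul, hPv, Real.norm_eq_abs, abs_of_nonneg hs,
      smul_eq_mul]
    have : 0 ≤ s * ‖P‖ := by positivity
    nlinarith
  have hMv : ∀ (x : X) (s : ℝ), 0 ≤ s → g x ≤ g (x + s • v) := fun x s hs => hM _ _ (hsteep x s hs)
  -- full growth inside G
  have hC : ∀ x s, 0 ≤ s → segment ℝ x (x + s • v) ⊆ G → g x + s * ‖P‖ ≤ g (x + s • v) := by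
    intro x s hs hseg
    rw [← le_sub_iff_add_le, hg, hg]
    refine csSup_le (hne _) ?_
    rintro m ⟨r, hr, γ, hγ, hγe, rfl⟩
    rw [le_sub_iff_add_le]
    rcases le_total s r with hsr | hrs
    · have e : x + r • v = x + s • v + (r - s) • v := by module
      refine le_csSup (hbdd _) ⟨r - s, by linarith, γ, hγ, ?_, ?_⟩
      · rw [← e]; exact hγe
      · rw [← e]; ring
    · have e : x + s • v = x + r • v + (s - r) • v := by module
      have hst := hsteep (x + r • v) (s - r) (by linarith)
      rw [← e] at hst
      obtain ⟨η, hη, hηe, -, hle⟩ := ext18 G P hp α hα0 _ hB γ hγ _ (x + s • v) hγe hst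
      have hsub : segment ℝ (x + r • v) (x + s • v) ⊆ segment ℝ x (x + s • v) := by
        refine (convex_segment x (x + s • v)).segment_subset ?_ (right_mem_segment _ _ _)
        rcases hs.eq_or_lt with h0 | h0
        · have : r = 0 := by linarith
          subst this
          simpa using left_mem_segment ℝ x (x + s • v)
        · rw [segment_eq_image']
          refine ⟨r / s, ⟨by positivity, (div_le_one h0).2 hrs⟩, ?_⟩
          simp only [add_sub_cancel_left, smul_smul]
          rw [div_mul_cancel₀ _ h0.ne']
      have h2 := hle (hsub.trans hseg)
      have h3 : P (x + s • v - (x + r • v)) = (s - r) * ‖P‖ := by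
        rw [show x + s • v - (x + r • v) = (s - r) • v by module, map_smul, hPv, smul_eq_mul]
      rw [h3] at h2
      refine le_trans ?_ (le_csSup (hbdd (x + s • v)) ⟨0, le_rfl, η, hη, ?_, rfl⟩)
      · simp only [zero_smul, add_zero, zero_mul, sub_zero]
        linarith
      · simpa using hηe
  -- kernel estimate, one-sided
  have hK1 : ∀ x y, P y = 0 → g x ≤ g (x + y) + α * ‖P‖ / (1 - α) * ‖y‖ := by
    intro x y hy
    have hs : 0 ≤ α * ‖y‖ / (1 - α) := by positivity
    obtain ⟨s, hse⟩ : ∃ s, s = α * ‖y‖ / (1 - α) := ⟨_, rfl⟩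
    rw [← hse] at hs
    have h1 := hA (x + y) s hs
    have h2 : g x ≤ g (x + y + s • v) := by
      apply hM
      have e : x + y + s • v - x = y + s • v := by abel
      rw [e, map_add, hy, map_smul, hPv, zero_add, smul_eq_mul]
      have h3 : ‖y + s • v‖ ≤ ‖y‖ + s := by
        refine (norm_add_le _ _).trans ?_
        rw [norm_smul, hv, Real.norm_eq_abs, abs_of_nonneg hs, mul_one]
      have h4 : α * (‖y‖ + s) = s := by
        rw [hse]; field_simp; ring
      calc α * ‖P‖ * ‖y + s • v‖ ≤ α * ‖P‖ * (‖y‖ + s) := by gcongr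
        _ = (α * (‖y‖ + s)) * ‖P‖ := by ring
        _ = s * ‖P‖ := by rw [h4]
    have h5 : s * ‖P‖ = α * ‖P‖ / (1 - α) * ‖y‖ := by rw [hse]; ring
    linarith
  have hK : ∀ x y : X, P y = 0 → |g (x + y) - g x| ≤ α * ‖P‖ / (1 - α) * ‖y‖ := by
    intro x y hy
    have h1 := hK1 x y hy
    have h2 := hK1 (x + y) (-y) (by rw [map_neg, hy, neg_zero])
    rw [add_neg_cancel_right, norm_neg] at h2
    rw [abs_le]
    constructor <;> linarith
  -- behaviour along v
  have hV : ∀ (x : X) (s : ℝ), ∃ l ∈ Set.Icc (0 : ℝ) 1, g (x + s • v) = g x + l * (s * ‖P‖) ∧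
      (segment ℝ x (x + s • v) ⊆ G → l = 1) := by
    intro x s
    rcases lt_trichotomy s 0 with h0 | h0 | h0
    · have hq : 0 < (-s) * ‖P‖ := mul_pos (by linarith) hp
      have e : x + s • v + (-s) • v = x := by module
      have h1 := hA (x + s • v) (-s) (by linarith)
      have h2 := hMv (x + s • v) (-s) (by linarith)
      have h3 := hC (x + s • v) (-s) (by linarith)
      rw [e] at h1 h2 h3
      refine ⟨(g x - g (x + s • v)) / ((-s) * ‖P‖), ⟨div_nonneg (by linarith) hq.le,
        (div_le_one hq).2 (by linarith)⟩, ?_, ?_⟩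
      · have : s ≠ 0 := h0.ne
        field_simp
        ring
      · intro hs
        rw [segment_symm] at hs
        have := h3 hs
        rw [div_eq_one_iff_eq hq.ne']
        linarith
    · subst h0
      exact ⟨1, by simp, by simp, fun _ => rfl⟩
    · have hq : 0 < s * ‖P‖ := mul_pos h0 hp
      have h1 := hA x s h0.le
      have h2 := hMv x s h0.le
      have h3 := hC x s h0.le
      refine ⟨(g (x + s • v) - g x) / (s * ‖P‖), ⟨div_nonneg (by linarith) hq.le,
        (div_le_one hq).2 (by linarith)⟩, ?_, ?_⟩
      · field_simp
        ring
      · intro hs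
        have := h3 hs
        rw [div_eq_one_iff_eq hq.ne']
        linarith
  have h3 : ∀ x w : X, ∃ l ∈ Set.Icc (0 : ℝ) 1,
        |g (x + w) - (g x + l * P w)| ≤ 2 * α * ‖P‖ / (1 - α) * ‖w‖ ∧
        (segment ℝ x (x + (P w / ‖P‖) • v) ⊆ G → l = 1) := by
    intro x w
    obtain ⟨l, hl, he, hl1⟩ := hV x (P w / ‖P‖)
    refine ⟨l, hl, ?_, hl1⟩
    rw [div_mul_cancel₀ _ hp.ne'] at he
    rw [← he]
    have hk := hK (x + (P w / ‖P‖) • v) (w - (P w / ‖P‖) • v)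
      (by rw [map_sub, map_smul, hPv, smul_eq_mul, div_mul_cancel₀ _ hp.ne', sub_self])
    rw [show x + (P w / ‖P‖) • v + (w - (P w / ‖P‖) • v) = x + w by abel] at hk
    have hn : ‖w - (P w / ‖P‖) • v‖ ≤ 2 * ‖w‖ := by
      refine (norm_sub_le _ _).trans ?_
      rw [norm_smul, hv, mul_one, norm_div, norm_norm]
      have : ‖P w‖ / ‖P‖ ≤ ‖w‖ := by
        rw [div_le_iff₀ hp, mul_comm]; exact P.le_opNorm w
      linarith
    refine hk.trans ?_
    calc α * ‖P‖ / (1 - α) * ‖w - (P w / ‖P‖) • v‖ ≤ α * ‖P‖ / (1 - α) * (2 * ‖w‖) := by gcongr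
      _ = 2 * α * ‖P‖ / (1 - α) * ‖w‖ := by ring
  refine ⟨g, fun x => ⟨hg0 x, hg1 x⟩, hK, h3, ?_⟩
  apply LipschitzWith.of_dist_le_mul
  intro a b
  rw [Real.coe_toNNReal _ (by positivity), Real.dist_eq, dist_eq_norm]
  obtain ⟨l, ⟨hl0, hl1⟩, hle, -⟩ := h3 b (a - b)
  rw [add_sub_cancel] at hle
  have h6 : |l * P (a - b)| ≤ ‖P‖ * ‖a - b‖ := by
    rw [abs_mul, abs_of_nonneg hl0]
    have := P.le_opNorm (a - b)
    rw [Real.norm_eq_abs] at this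
    nlinarith [abs_nonneg (P (a - b))]
  have h7 : |g a - g b| ≤ |g a - (g b + l * P (a - b))| + |l * P (a - b)| := by
    refine le_trans (le_of_eq ?_) (abs_add_le _ _)
    congr 1
    ring
  have h8 : (1 + 2 * α / (1 - α)) * ‖P‖ * ‖a - b‖
    = ‖P‖ * ‖a - b‖ + 2 * α * ‖P‖ / (1 - α) * ‖a - b‖ := by ring
  linarith
end
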